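/- For every n ≥ 0, the number of Kreweras words of length 3n equals 4^n/((n+1)(2n+1))·binomial(3n, n); equivalently, this number multiplied by (n+1)(2n+1) equals 4^n·binomial(3n, n). -/

import Mathlib

/-- The three letters of a Kreweras word. -/
inductive KLetter : Type
  | A | B | C
deriving DecidableEq, Repr

open KLetter

/-- `w` is a Kreweras word of length `3 * n`: it has `n` `A`'s, `n` `B`'s, `n` `C`'s,
and every prefix has at least as many `A`'s as `B`'s and at least as many `A`'s as `C`'s. -/
def IsKrewerasWord (n : ℕ) (w : List KLetter) : Prop :=
  w.length = 3 * n ∧ w.count A = n ∧ w.count B = n ∧ w.count C = n ∧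
  ∀ k : ℕ, (w.take k).count B ≤ (w.take k).count A ∧
           (w.take k).count C ≤ (w.take k).count A

/-- `kiota w` is the smallest index `ι ≥ 1` (1-indexed) such that the prefix of
length `ι` of `w` has equally many `A`'s as `B`'s, or equally many `A`'s as `C`'s
(and `0` if no such index exists). -/
def kiota (w : List KLetter) : ℕ :=
  (((List.range (w.length + 1)).filter fun k =>
      decide (1 ≤ k) &&
      (((w.take k).count A == (w.take k).count B) ||
       ((w.take k).count A == (w.take k).count C))).headD 0)

/-- Promotion of a Kreweras word:
`pro w = (w₂, …, w_{ι-1}, A, w_{ι+1}, …, w_{3n}, w_ι)` where `ι = kiota w`. -/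
def pro (w : List KLetter) : List KLetter :=
  ((w.drop 1).set (kiota w - 2) A) ++ [w.getD (kiota w - 1) A]

/-- The trip permutation `σ_w` of a Kreweras word of length `3 * n`, as a function on
1-indexed positions: `σ_w i` is the unique element of `{1, …, 3n}` congruent to
`kiota (pro^[i-1] w) + i - 1` modulo `3 * n`. -/
def ksigma (n : ℕ) (w : List KLetter) (i : ℕ) : ℕ :=
  (kiota (pro^[i - 1] w) + i - 2) % (3 * n) + 1

/-- `keps w i` is the letter of `pro^[i-1] w` in (1-indexed) position `kiota (pro^[i-1] w)`. -/
def keps (w : List KLetter) (i : ℕ) : KLetter :=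
  (pro^[i - 1] w).getD (kiota (pro^[i - 1] w) - 1) A

/-- The negation swapping `B` and `C` (and fixing `A`). -/
def negL : KLetter → KLetter
  | A => A
  | B => C
  | C => B

open Classical in
/-- The involution `τ_i` on Kreweras words of length `3 * n`: swap the letters in
(1-indexed) positions `i` and `i + 1` if the result is again a Kreweras word,
and otherwise do nothing. -/
noncomputable def tau (n i : ℕ) (w : List KLetter) : List KLetter :=
  let w' := (w.set (i - 1) (w.getD i A)).set i (w.getD (i - 1) A)
  if IsKrewerasWord n w' then w' else w

/-- `tauDown n j = τ_j ∘ τ_{j-1} ∘ ⋯ ∘ τ_1`. -/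
noncomputable def tauDown (n : ℕ) : ℕ → List KLetter → List KLetter
  | 0, w => w
  | j + 1, w => tau n (j + 1) (tauDown n j w)

/-- `evacAux n j = (tauDown n 1) ∘ (tauDown n 2) ∘ ⋯ ∘ (tauDown n j)`. -/
noncomputable def evacAux (n : ℕ) : ℕ → List KLetter → List KLetter
  | 0, w => w
  | j + 1, w => evacAux n j (tauDown n (j + 1) w)

/-- Evacuation on Kreweras words of length `3 * n`:
`evac = (τ_1) ∘ (τ_2 ∘ τ_1) ∘ ⋯ ∘ (τ_{3n-1} ∘ ⋯ ∘ τ_2 ∘ τ_1)`. -/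
noncomputable def evac (n : ℕ) (w : List KLetter) : List KLetter :=
  evacAux n (3 * n - 1) w

/-- `tauAsc n k c = τ_{k+c-1} ∘ ⋯ ∘ τ_{k+1} ∘ τ_k`. -/
noncomputable def tauAsc (n k : ℕ) : ℕ → List KLetter → List KLetter
  | 0, w => w
  | j + 1, w => tau n (k + j) (tauAsc n k j w)

/-- `evacStarAux n j = (tauAsc n 1 (3n-1)) ∘ (tauAsc n 2 (3n-2)) ∘ ⋯ ∘ (tauAsc n j (3n-j))`. -/
noncomputable def evacStarAux (n : ℕ) : ℕ → List KLetter → List KLetter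
  | 0, w => w
  | j + 1, w => evacStarAux n j (tauAsc n (j + 1) (3 * n - (j + 1)) w)

/-- Dual evacuation on Kreweras words of length `3 * n`:
`evac* = (τ_{3n-1} ∘ ⋯ ∘ τ_1) ∘ (τ_{3n-1} ∘ ⋯ ∘ τ_2) ∘ ⋯ ∘ (τ_{3n-1})`. -/
noncomputable def evacStar (n : ℕ) (w : List KLetter) : List KLetter :=
  evacStarAux n (3 * n - 1) w

/-- The three-element "V"-shaped poset: `a < b`, `a < c`, with `b`, `c` incomparable. -/
inductive VP : Type
  | a | b | c
deriving DecidableEq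

instance : PartialOrder VP where
  le x y := x = y ∨ x = VP.a
  le_refl x := Or.inl rfl
  le_trans x y z hxy hyz := by
    rcases hxy with rfl | rfl
    · exact hyz
    · exact Or.inr rfl
  le_antisymm x y hxy hyx := by
    rcases hxy with rfl | rfl
    · rfl
    · rcases hyx with rfl | rfl <;> rfl

/-- The labeling of elements of `V(n) = VP × Fin n` by letters. -/
def vlabel {n : ℕ} (p : VP × Fin n) : KLetter :=
  match p.1 with
  | VP.a => A
  | VP.b => B
  | VP.c => C

/-- `L` is a linear extension of `V(n) = VP × Fin n` (with the product order):
a list of all elements of `V(n)`, each appearing once, such that `L_i ≤ L_j`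
implies `i ≤ j`. -/
def IsLinearExtension (n : ℕ) (L : List (VP × Fin n)) : Prop :=
  L.Nodup ∧ (∀ p : VP × Fin n, p ∈ L) ∧
  ∀ i j : Fin L.length, L.get i ≤ L.get j → (i : ℕ) ≤ (j : ℕ)

/-- A connected Kreweras word: a Kreweras word of length `3 * n` having no proper
nonempty consecutive substring which is itself a Kreweras word. -/
def ConnectedKrewerasWord (n : ℕ) (w : List KLetter) : Prop :=
  IsKrewerasWord n w ∧
  ∀ (u : List KLetter) (m : ℕ), u <:+: w → u ≠ [] → u ≠ w → ¬ IsKrewerasWord m u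

namespace Krew

/-- Reversed words of length `m` of quadrant walks ending at `(i, j)`. -/
def F : ℕ → ℕ → ℕ → Finset (List KLetter)
  | 0, 0, 0 => {[]}
  | 0, _ + 1, _ => ∅
  | 0, 0, _ + 1 => ∅
  | m + 1, i, j =>
    (if 0 < i ∧ 0 < j then (F m (i - 1) (j - 1)).map ⟨List.cons A, List.cons_injective⟩
      else ∅) ∪
    ((F m (i + 1) j).map ⟨List.cons B, List.cons_injective⟩ ∪
     (F m i (j + 1)).map ⟨List.cons C, List.cons_injective⟩)

/-- Number of quadrant walks. -/
def cnt (m i j : ℕ) : ℕ := (F m i j).card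

theorem cnt_zero (i j : ℕ) : cnt 0 i j = if i = 0 ∧ j = 0 then 1 else 0 := by
  rcases i with _ | i <;> rcases j with _ | j <;> simp [cnt, F]

theorem cnt_succ (m i j : ℕ) : cnt (m + 1) i j =
    (if 0 < i ∧ 0 < j then cnt m (i - 1) (j - 1) else 0) + cnt m (i + 1) j + cnt m i (j + 1) := by
  unfold cnt
  rw [F, Finset.card_union_of_disjoint, Finset.card_union_of_disjoint]
  · rcases i with _ | i <;> rcases j with _ | j <;> simp [add_assoc]
  · rw [Finset.disjoint_left]
    intro x hx hy
    simp only [Finset.mem_map, Function.Embedding.coeFn_mk] at hx hy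
    obtain ⟨a, -, rfl⟩ := hx
    obtain ⟨b, -, hb⟩ := hy
    simp at hb
  · rw [Finset.disjoint_left]
    intro x hx hy
    rcases i with _ | i <;> rcases j with _ | j <;>
      simp [Finset.mem_map, Finset.mem_union] at hx hy
    obtain ⟨a, -, rfl⟩ := hx
    simp at hy

theorem mem_F (w : List KLetter) : ∀ (m i j : ℕ), w ∈ F m i j ↔
    w.length = m ∧ w.count A = w.count B + i ∧ w.count A = w.count C + j ∧
    ∀ s, s <:+ w → s.count B ≤ s.count A ∧ s.count C ≤ s.count A := by
  induction w with
  | nil =>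
    intro m i j
    rcases m with _ | m <;> rcases i with _ | i <;> rcases j with _ | j <;> simp [F]
  | cons l w ih =>
    intro m i j
    have hs : (∀ s, s <:+ l :: w → s.count B ≤ s.count A ∧ s.count C ≤ s.count A) ↔
        ((l :: w).count B ≤ (l :: w).count A ∧ (l :: w).count C ≤ (l :: w).count A) ∧
        (∀ s, s <:+ w → s.count B ≤ s.count A ∧ s.count C ≤ s.count A) := by
      simp only [List.suffix_cons_iff]
      constructor
      · intro h
        exact ⟨h _ (Or.inl rfl), fun s hs => h s (Or.inr hs)⟩
      · rintro ⟨h1, h2⟩ s (rfl | hs)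
        · exact h1
        · exact h2 s hs
    rw [hs]
    have hw : (∀ s, s <:+ w → s.count B ≤ s.count A ∧ s.count C ≤ s.count A) →
      w.count B ≤ w.count A ∧ w.count C ≤ w.count A := fun h => h w (List.suffix_refl w)
    generalize (∀ s, s <:+ w → s.count B ≤ s.count A ∧ s.count C ≤ s.count A) = P at *
    rcases m with _ | m
    · rcases i with _ | i <;> rcases j with _ | j <;> simp [F]
    · rw [F]
      cases l
      · rcases i with _ | i <;> rcases j with _ | j <;>
          simp [ih, List.count_cons] <;> grind
      · rcases i with _ | i <;> rcases j with _ | j <;>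
          simp [ih, List.count_cons] <;> grind
      · rcases i with _ | i <;> rcases j with _ | j <;>
          simp [ih, List.count_cons] <;> grind

theorem len_eq (w : List KLetter) : w.length = w.count A + w.count B + w.count C := by
  induction w with
  | nil => simp
  | cons l w ih => cases l <;> simp [List.count_cons] <;> omega

theorem card_eq (n : ℕ) : Nat.card {w : List KLetter // IsKrewerasWord n w} = cnt (3 * n) 0 0 := by
  have e : {w : List KLetter // IsKrewerasWord n w} ≃ {w // w ∈ F (3 * n) 0 0} := by
    refine Equiv.subtypeEquiv (Function.Involutive.toPerm List.reverse List.reverse_involutive) ?_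
    intro w
    rw [mem_F]
    simp only [Function.Involutive.coe_toPerm, List.length_reverse, List.count_reverse]
    unfold IsKrewerasWord
    have hl := len_eq w
    have : (∀ s, s <:+ w.reverse → s.count B ≤ s.count A ∧ s.count C ≤ s.count A) ↔
       ∀ k : ℕ, (w.take k).count B ≤ (w.take k).count A ∧
           (w.take k).count C ≤ (w.take k).count A := by
      constructor
      · intro h k
        have := h (w.take k).reverse (List.reverse_suffix.2 (List.take_prefix k w))
        simpa using this
      · intro h s hs
        have h1 : s.reverse <+: w := by
          rw [← List.reverse_suffix]; simpa using hs
        have := h s.reverse.length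
        rw [← List.prefix_iff_eq_take.1 h1] at this
        simpa using this
    rw [this]
    constructor
    · rintro ⟨h1, h2, h3, h4, h5⟩
      exact ⟨h1, by omega, by omega, h5⟩
    · rintro ⟨h1, h2, h3, h5⟩
      exact ⟨h1, by omega, by omega, by omega, h5⟩
  rw [Nat.card_congr e]
  simp [cnt]

theorem cnt_symm (m : ℕ) : ∀ i j, cnt m i j = cnt m j i := by
  induction m with
  | zero => intro i j; simp [cnt_zero, and_comm]
  | succ m ih =>
    intro i j
    rw [cnt_succ, cnt_succ, ih (i - 1), ih (i + 1), ih i]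
    simp only [and_comm]
    omega

end Krew

namespace Krew

open PowerSeries in
/-- Contractions on power series have fixed points. -/
theorem exists_fixed {R : Type*} [CommRing R] (Φ : R⟦X⟧ → R⟦X⟧)
    (h : ∀ n f g, (X : R⟦X⟧) ^ n ∣ f - g → (X : R⟦X⟧) ^ (n + 1) ∣ Φ f - Φ g) :
    ∃ f, f = Φ f := by
  have step : ∀ n k, (X : R⟦X⟧) ^ n ∣ Φ^[n + k] 0 - Φ^[n] 0 := by
    intro n
    induction n with
    | zero => intro k; simp
    | succ n ih =>
      intro k
      have := h n _ _ (ih k)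
      rw [← Function.iterate_succ_apply' Φ, ← Function.iterate_succ_apply' Φ] at this
      convert this using 3
      omega
  let f : R⟦X⟧ := PowerSeries.mk fun n => coeff n (Φ^[n + 1] 0)
  have hf : ∀ n, (X : R⟦X⟧) ^ n ∣ f - Φ^[n] 0 := by
    intro n
    rw [X_pow_dvd_iff]
    intro m hm
    obtain ⟨k, rfl⟩ : ∃ k, n = m + 1 + k := ⟨n - (m + 1), by omega⟩
    have := (X_pow_dvd_iff.1 (step (m + 1) k)) m (by omega)
    rw [map_sub, sub_eq_zero] at this
    simp [f, this]
  refine ⟨f, ?_⟩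
  rw [← sub_eq_zero]
  ext n
  have h1 := hf (n + 1)
  have h2 := h n _ _ (hf n)
  rw [← Function.iterate_succ_apply' Φ] at h2
  have h3 := dvd_sub h1 h2
  have := (X_pow_dvd_iff.1 h3) n (by omega)
  simpa using this

open PowerSeries in
theorem dvd_C_mul {R : Type*} [CommRing R] [IsDomain R] (a : R) (ha : a ≠ 0) (n : ℕ) (f : R⟦X⟧)
    (h : (X : R⟦X⟧) ^ n ∣ PowerSeries.C a * f) : (X : R⟦X⟧) ^ n ∣ f := by
  rw [X_pow_dvd_iff] at *
  intro m hm
  have := h m hm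
  rw [coeff_C_mul] at this
  exact (mul_eq_zero.1 this).resolve_left ha

open PowerSeries in
theorem eq_zero_of_dvd {R : Type*} [CommRing R] (f : R⟦X⟧)
    (h : ∀ n, (X : R⟦X⟧) ^ n ∣ f) : f = 0 := by
  ext n
  have := (X_pow_dvd_iff.1 (h (n + 1))) n (by omega)
  simpa using this

open PowerSeries in
theorem dvd_map {R S : Type*} [CommRing R] [CommRing S] (φ : R →+* S) (n : ℕ) (f : R⟦X⟧)
    (h : (X : R⟦X⟧) ^ n ∣ f) : (X : S⟦X⟧) ^ n ∣ PowerSeries.map φ f := by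
  obtain ⟨g, rfl⟩ := h
  exact ⟨PowerSeries.map φ g, by simp⟩

open PowerSeries in
theorem cc_map {R S : Type*} [CommRing R] [CommRing S] (φ : R →+* S) (f : R⟦X⟧) :
    constantCoeff (PowerSeries.map φ f) = φ (constantCoeff f) := by
  rw [← coeff_zero_eq_constantCoeff_apply, ← coeff_zero_eq_constantCoeff_apply, coeff_map]

open PowerSeries in
/-- The algebraic series `g = 1 + 4 t^3 g^3`. -/
theorem exists_g : ∃ g : ℚ⟦X⟧, g = 1 + 4 * X ^ 3 * g ^ 3 := by
  apply exists_fixed (fun g : ℚ⟦X⟧ => 1 + 4 * X ^ 3 * g ^ 3)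
  rintro n f g ⟨k, hk⟩
  exact ⟨4 * X ^ 2 * (f ^ 2 + f * g + g ^ 2) * k, by
    beta_reduce
    linear_combination (4 * X ^ 3 * (f ^ 2 + f * g + g ^ 2)) * hk⟩

open PowerSeries in
theorem exists_c (a : ℚ⟦X⟧⟦X⟧) : ∃ c : ℚ⟦X⟧⟦X⟧, c = 1 + X ^ 2 * a * c ^ 2 := by
  apply exists_fixed (fun c : ℚ⟦X⟧⟦X⟧ => 1 + X ^ 2 * a * c ^ 2)
  rintro n f g ⟨k, hk⟩
  exact ⟨X * a * (f + g) * k, by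
    beta_reduce
    linear_combination (X ^ 2 * a * (f + g)) * hk⟩

open PowerSeries in
/-- Uniqueness for the quadratic catalytic equation. -/
theorem uniq (F G : ℚ⟦X⟧⟦X⟧) (f g : ℚ⟦X⟧)
    (hf : PowerSeries.map (constantCoeff (R := ℚ)) F = f)
    (hg : PowerSeries.map (constantCoeff (R := ℚ)) G = g)
    (hF : X ^ 2 * PowerSeries.C X ^ 2 * F ^ 2 - PowerSeries.C X * F + 2 * X * F + PowerSeries.C X
      = 2 * X * PowerSeries.map PowerSeries.C f)
    (hG : X ^ 2 * PowerSeries.C X ^ 2 * G ^ 2 - PowerSeries.C X * G + 2 * X * G + PowerSeries.C X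
      = 2 * X * PowerSeries.map PowerSeries.C g) : f = g := by
  have key : F - G = 0 := by
    apply eq_zero_of_dvd
    intro n
    induction n with
    | zero => simp
    | succ n ih =>
      apply dvd_C_mul X X_ne_zero
      have h0 : (X : ℚ⟦X⟧⟦X⟧) ^ n ∣ PowerSeries.map PowerSeries.C (f - g) := by
        apply dvd_map
        rw [← hf, ← hg, ← map_sub]
        exact dvd_map _ _ _ ih
      obtain ⟨k, hk⟩ := ih
      obtain ⟨l, hl⟩ := h0
      rw [map_sub] at hl
      refine ⟨X * PowerSeries.C X ^ 2 * (F + G) * k + 2 * k - 2 * l, ?_⟩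
      linear_combination hG - hF + (X ^ 2 * PowerSeries.C X ^ 2 * (F + G) + 2 * X) * hk - 2 * X * hl
  rw [← hf, ← hg, sub_eq_zero.1 key]

open PowerSeries in
/-- Solving the quadratic catalytic equation. -/
theorem solve (F : ℚ⟦X⟧⟦X⟧) (f : ℚ⟦X⟧)
    (hf : PowerSeries.map (constantCoeff (R := ℚ)) F = f)
    (hF : X ^ 2 * PowerSeries.C X ^ 2 * F ^ 2 - PowerSeries.C X * F + 2 * X * F + PowerSeries.C X
      = 2 * X * PowerSeries.map PowerSeries.C f)
    (g : ℚ⟦X⟧) (hg : g = 1 + 4 * X ^ 3 * g ^ 3) : f = g * (1 - 2 * X ^ 3 * g ^ 3) := by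
  obtain ⟨c, hc⟩ := exists_c (PowerSeries.C X * (PowerSeries.map PowerSeries.C g) ^ 2)
  have hc0 : PowerSeries.map (constantCoeff (R := ℚ)) c = 1 := by
    have := congrArg (PowerSeries.map (constantCoeff (R := ℚ))) hc
    simpa using this
  have hcc : ∀ g : ℚ⟦X⟧, PowerSeries.map (constantCoeff (R := ℚ))
      (PowerSeries.map PowerSeries.C g) = g := by
    intro g; ext n; simp
  have hg' := congrArg (PowerSeries.map (PowerSeries.C (R := ℚ))) hg
  simp only [map_add, map_mul, map_one, map_pow, PowerSeries.map_X, map_ofNat] at hg'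
  refine uniq F (PowerSeries.map PowerSeries.C g * c *
    (1 - 2 * X ^ 3 * (PowerSeries.map PowerSeries.C g) ^ 3 * c)) f _ hf ?_ hF ?_
  · simp only [map_sub, map_mul, map_one, map_pow, PowerSeries.map_X, map_ofNat, hc0, hcc]
    ring
  · simp only [map_sub, map_mul, map_one, map_pow, PowerSeries.map_X, map_ofNat]
    generalize (PowerSeries.map PowerSeries.C g : ℚ⟦X⟧⟦X⟧) = G at *
    generalize (PowerSeries.C X : ℚ⟦X⟧⟦X⟧) = x at *
    generalize (X : ℚ⟦X⟧⟦X⟧) = t at *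
    linear_combination (-x * c * (1 - 2 * t ^ 3 * G ^ 3 * c)) * hg' +
      (-x * (1 - 2 * t ^ 3 * G ^ 3 * c) ^ 2 + 2 * t * G * (1 - 2 * t ^ 3 * G ^ 3 * (1 + c))) * hc

open PowerSeries in
theorem coeff_rec (g q : ℚ⟦X⟧) (hg : g = 1 + 4 * X ^ 3 * g ^ 3)
    (hq : q = g * (1 - 2 * X ^ 3 * g ^ 3)) :
    coeff 0 q = 1 ∧ ∀ m : ℕ, (2 * (m + 3) + 3) * ((m : ℚ) + 3 + 3) * coeff (m + 3) q
      = 54 * (m + 1) * (m + 2) * coeff m q := by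
  have hg0 : constantCoeff g = 1 := by
    have := congrArg (constantCoeff (R := ℚ)) hg
    simpa using this
  have hq0 : coeff 0 q = 1 := by
    rw [hq]; simp [hg0]
  refine ⟨hq0, ?_⟩
  -- Euler operator
  obtain ⟨θ, hθ⟩ : ∃ θ : ℚ⟦X⟧ → ℚ⟦X⟧, ∀ f, θ f = X * derivative ℚ f := ⟨_, fun _ => rfl⟩
  have hθc : ∀ f m, coeff m (θ f) = m * coeff m f := by
    intro f m
    rw [hθ]
    rcases m with _ | m
    · simp
    · rw [coeff_succ_X_mul]
      simp [coeff_derivative]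
      ring
  have hθm : ∀ a b, θ (a * b) = a * θ b + b * θ a := by
    intro a b
    simp only [hθ, Derivation.leibniz, smul_eq_mul]
    ring
  have hθa : ∀ a b, θ (a + b) = θ a + θ b := by
    intro a b
    simp only [hθ, map_add]
    ring
  have hθs : ∀ a b, θ (a - b) = θ a - θ b := by
    intro a b
    simp only [hθ, map_sub]
    ring
  have hθ1 : θ 1 = 0 := by
    simp [hθ]
  have hθ2 : θ 2 = 0 := by
    have : (2 : ℚ⟦X⟧) = 1 + 1 := by norm_num
    rw [this, hθa, hθ1]; simp
  have hθ3 : θ 3 = 0 := by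
    have : (3 : ℚ⟦X⟧) = 1 + 2 := by norm_num
    rw [this, hθa, hθ1, hθ2]; simp
  have hθ4 : θ 4 = 0 := by
    have : (4 : ℚ⟦X⟧) = 2 + 2 := by norm_num
    rw [this, hθa, hθ2]; simp
  have hθX : θ X = X := by
    simp [hθ]
  have h1 : 4 * X ^ 3 * g ^ 3 = g - 1 := by linear_combination -hg
  have hT : (3 - 2 * g) * θ g = 3 * g * (g - 1) := by
    have h := congrArg θ hg
    simp only [pow_succ, pow_zero, one_mul, hθa, hθm, hθ1, hθ4, hθX] at h
    linear_combination g * h + (3 * g + 3 * θ g) * h1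
  have h2q : 2 * q = g * (3 - g) := by
    linear_combination 2 * hq - g * h1
  have h2q' : 2 * θ q = 3 * g * (g - 1) := by
    have h := congrArg θ h2q
    simp only [hθm, hθs, hθ2, hθ3] at h
    linear_combination h + hT
  have h2q'' : 2 * θ (θ q) = 3 * (2 * g - 1) * θ g := by
    have h := congrArg θ h2q'
    simp only [hθm, hθs, hθ2, hθ3, hθ1] at h
    linear_combination h
  have hode : 2 * θ (θ q) + 9 * θ q + 9 * q - 9 = 54 * X ^ 3 * (θ (θ q) + 3 * θ q + 2 * q) := by
    have hne : (4 : ℚ⟦X⟧) * g ^ 3 * (3 - 2 * g) ≠ 0 := by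
      intro h
      have := congrArg (constantCoeff (R := ℚ)) h
      simp only [map_sub, map_mul, map_one, map_pow, map_ofNat, hg0, map_zero] at this
      norm_num at this
    apply mul_left_cancel₀ hne
    generalize θ (θ q) = a at *
    generalize θ q = b at *
    generalize θ g = T at *
    have e1 : 2 * (2 * a + 9 * b + 9 * q - 9) = 6 * (2 * g - 1) * T + 18 * g ^ 2 - 18 := by
      linear_combination 2 * h2q'' + 9 * h2q' + 9 * h2q
    have e2 : 2 * (a + 3 * b + 2 * q) = 3 * (2 * g - 1) * T + 7 * g ^ 2 - 3 * g := by
      linear_combination h2q'' + 3 * h2q' + 2 * h2q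
    linear_combination (2 * g ^ 3 * (3 - 2 * g)) * e1
      - (2 * g ^ 3 * (3 - 2 * g)) * (54 * X ^ 3) * e2
      - 27 * (3 - 2 * g) * (3 * (2 * g - 1) * T + 7 * g ^ 2 - 3 * g) * h1
      + (2 * g ^ 3 * 6 * (2 * g - 1) - 27 * (g - 1) * 3 * (2 * g - 1)) * hT
  intro m
  have h := congrArg (coeff (m + 3)) hode
  have e54 : (54 : ℚ⟦X⟧) * X ^ 3 * (θ (θ q) + 3 * θ q + 2 * q)
    = X ^ 3 * (PowerSeries.C 54 * (θ (θ q) + PowerSeries.C 3 * θ q + PowerSeries.C 2 * q)) := by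
    simp only [map_ofNat]; ring
  have e9 : 2 * θ (θ q) + 9 * θ q + 9 * q - 9 =
    PowerSeries.C 2 * θ (θ q) + PowerSeries.C 9 * θ q + PowerSeries.C 9 * q - PowerSeries.C 9 := by
    simp only [map_ofNat]
  rw [e54, e9, coeff_X_pow_mul] at h
  simp only [map_add, map_sub, coeff_C_mul, hθc, coeff_C, Nat.cast_add, Nat.cast_ofNat] at h
  rw [if_neg (by omega)] at h
  linear_combination h

theorem choose_rec (n : ℕ) : (3 * (n + 1)).choose (n + 1) * (n + 1) * (2 * n + 1) * 2
    = 3 * (3 * n + 1) * (3 * n + 2) * (3 * n).choose n := by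
  have h1 := Nat.add_one_mul_choose_eq (3 * n + 2) n
  have h2 := Nat.choose_mul_succ_eq (3 * n + 1) n
  have h3 := Nat.choose_mul_succ_eq (3 * n) n
  rw [show 3 * n + 1 + 1 - n = 2 * n + 2 by omega] at h2
  rw [show 3 * n + 1 - n = 2 * n + 1 by omega] at h3
  rw [show 3 * (n + 1) = 3 * n + 2 + 1 by ring, ← h1]
  have h4 : (3 * n + 2).choose n * (2 * (n + 1) * (2 * n + 1)) =
      (3 * n).choose n * ((3 * n + 1) * (3 * n + 2)) := by
    calc (3 * n + 2).choose n * (2 * (n + 1) * (2 * n + 1))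
        = ((3 * n + 1 + 1).choose n * (2 * n + 2)) * (2 * n + 1) := by ring
      _ = _ := by rw [← h2]
      _ = ((3 * n + 1).choose n * (2 * n + 1)) * (3 * n + 2) := by ring
      _ = _ := by rw [← h3]; ring
  nlinarith [h4]

open PowerSeries in
theorem coeff_final (g q : ℚ⟦X⟧) (hg : g = 1 + 4 * X ^ 3 * g ^ 3)
    (hq : q = g * (1 - 2 * X ^ 3 * g ^ 3)) (n : ℕ) :
    coeff (3 * n) q * ((n + 1) * (2 * n + 1)) = 4 ^ n * ((3 * n).choose n : ℚ) := by
  obtain ⟨h0, hr⟩ := coeff_rec g q hg hq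
  induction n with
  | zero => simpa using h0
  | succ n ih =>
    have h := hr (3 * n)
    have hc := choose_rec n
    have hc' : ((3 * (n + 1)).choose (n + 1) : ℚ) * (n + 1) * (2 * n + 1) * 2
      = 3 * (3 * n + 1) * (3 * n + 2) * (3 * n).choose n := by exact_mod_cast hc
    rw [show 3 * n + 3 = 3 * (n + 1) by ring] at h
    have hne : (((n : ℚ) + 1) * (2 * n + 1) * 9) ≠ 0 := by positivity
    apply mul_left_cancel₀ hne
    push_cast at *
    linear_combination (n + 1) * (2 * n + 1) * h + 54 * (3 * n + 1) * (3 * n + 2) * ih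
      - 18 * 4 ^ n * hc'

end Krew

namespace Krew

open PowerSeries in
/-- Functional equation and consequences. -/
noncomputable def Q3 : ℚ⟦X⟧⟦X⟧⟦X⟧ :=
  PowerSeries.mk fun m => PowerSeries.mk fun j => PowerSeries.mk fun i => (cnt m i j : ℚ)

open PowerSeries in
noncomputable def Q3' : ℚ⟦X⟧⟦X⟧⟦X⟧ :=
  PowerSeries.mk fun m => PowerSeries.mk fun j => PowerSeries.mk fun i =>
    (cnt m (i + 1) (j + 1) : ℚ)

open PowerSeries in
noncomputable def Q2 : ℚ⟦X⟧⟦X⟧ :=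
  PowerSeries.mk fun m => PowerSeries.mk fun i => (cnt m i 0 : ℚ)

open PowerSeries in
noncomputable def Q2' : ℚ⟦X⟧⟦X⟧ :=
  PowerSeries.mk fun m => PowerSeries.mk fun i => (cnt m (i + 1) 0 : ℚ)

open PowerSeries in
noncomputable def Q1 : ℚ⟦X⟧ :=
  PowerSeries.mk fun m => (cnt m 0 0 : ℚ)

open PowerSeries in
/-- inclusion in the variable `x` -/
noncomputable def ix : ℚ⟦X⟧⟦X⟧ →+* ℚ⟦X⟧⟦X⟧⟦X⟧ := PowerSeries.map PowerSeries.C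

open PowerSeries in
/-- inclusion in the variable `y` -/
noncomputable def iy : ℚ⟦X⟧⟦X⟧ →+* ℚ⟦X⟧⟦X⟧⟦X⟧ := PowerSeries.map (PowerSeries.map PowerSeries.C)

open PowerSeries in
noncomputable def vx : ℚ⟦X⟧⟦X⟧⟦X⟧ := PowerSeries.C (PowerSeries.C X)

open PowerSeries in
noncomputable def vy : ℚ⟦X⟧⟦X⟧⟦X⟧ := PowerSeries.C X

open PowerSeries in
theorem Q2_eq : Q2 = PowerSeries.map PowerSeries.C Q1 + PowerSeries.C X * Q2' := by
  ext m i
  rcases i with _ | i <;>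
    simp [-map_natCast, Q2, Q1, Q2', coeff_C, coeff_succ_X_mul]

open PowerSeries in
theorem map_Q2 : PowerSeries.map (constantCoeff (R := ℚ)) Q2 = Q1 := by
  ext m
  simp [Q2, Q1]

open PowerSeries in
theorem Q3_eq : Q3 = ix Q2 + iy Q2 - ix (PowerSeries.map PowerSeries.C Q1) + vx * (vy * Q3') := by
  ext m j i
  rcases i with _ | i <;> rcases j with _ | j <;>
    simp [-map_natCast, cc_map, Q3, Q2, Q1, Q3', ix, iy, vx, vy, coeff_C, coeff_succ_X_mul, cnt_symm m 0]

open PowerSeries in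
theorem FE : vx * (vy * Q3) = vx * vy + X * (vx * Q3) + X * (vy * Q3)
    + X * (vx * (vx * (vy * (vy * Q3)))) - X * (vx * ix Q2) - X * (vy * iy Q2) := by
  ext m j i
  rcases m with _ | m
  · rcases i with _ | _ | i <;> rcases j with _ | _ | j <;>
      simp [-map_natCast, cc_map, Q3, Q2, ix, iy, vx, vy, coeff_C, coeff_succ_X_mul, coeff_X, cnt_zero]
  · rcases i with _ | _ | i <;> rcases j with _ | _ | j <;>
      simp [-map_natCast, cc_map, Q3, Q2, ix, iy, vx, vy, coeff_C, coeff_succ_X_mul, coeff_X, cnt_succ, cnt_symm m 0] <;>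
      try ring

open PowerSeries in
theorem invariant_const (D : ℚ⟦X⟧⟦X⟧) (H : ℚ⟦X⟧⟦X⟧⟦X⟧)
    (h : ix D - iy D = (vx * vy - X * (vx + vy + vx ^ 2 * vy ^ 2)) * H) :
    D = PowerSeries.map PowerSeries.C (PowerSeries.map (constantCoeff (R := ℚ)) D) := by
  set D0 := PowerSeries.map PowerSeries.C (PowerSeries.map (constantCoeff (R := ℚ)) D) with hD0
  have hy : D - D0 = - (X * PowerSeries.C X * PowerSeries.map (constantCoeff (R := ℚ⟦X⟧)) H) := by
    have h1 := congrArg (PowerSeries.map (constantCoeff (R := ℚ⟦X⟧))) h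
    have e1 : PowerSeries.map (constantCoeff (R := ℚ⟦X⟧)) (ix D) = D := by
      ext m i; simp [ix]
    have e2 : PowerSeries.map (constantCoeff (R := ℚ⟦X⟧)) (iy D) = D0 := by
      ext m i; simp [iy, hD0, cc_map]
    rw [map_sub, e1, e2] at h1
    rw [h1]
    simp [vx, vy]
  have hi : ix D0 = iy D0 := by
    ext m j i
    simp [ix, iy, hD0, coeff_C]
  have key : ∀ n, (X : ℚ⟦X⟧⟦X⟧⟦X⟧) ^ n ∣ H ∧ (X : ℚ⟦X⟧⟦X⟧) ^ n ∣ D - D0 := by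
    intro n
    induction n with
    | zero => simp
    | succ n ih =>
      have hD : (X : ℚ⟦X⟧⟦X⟧) ^ (n + 1) ∣ D - D0 := by
        rw [hy]
        obtain ⟨k, hk⟩ := dvd_map (constantCoeff (R := ℚ⟦X⟧)) n H ih.1
        rw [hk]
        exact ⟨- (PowerSeries.C X * k), by ring⟩
      refine ⟨?_, hD⟩
      have hne : (PowerSeries.C X * X : ℚ⟦X⟧⟦X⟧) ≠ 0 := by
        intro h
        have := congrArg (fun f => coeff 1 (coeff 1 f)) h
        simp [coeff_X] at this
      apply dvd_C_mul (PowerSeries.C X * X) hne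
      have h1 : (X : ℚ⟦X⟧⟦X⟧⟦X⟧) ^ (n + 1) ∣ ix (D - D0) := dvd_map _ _ _ hD
      have h2 : (X : ℚ⟦X⟧⟦X⟧⟦X⟧) ^ (n + 1) ∣ iy (D - D0) := dvd_map _ _ _ hD
      obtain ⟨k1, hk1⟩ := h1
      obtain ⟨k2, hk2⟩ := h2
      obtain ⟨k, hk⟩ := ih.1
      rw [map_sub] at hk1 hk2
      have hC : (PowerSeries.C (PowerSeries.C X * X) : ℚ⟦X⟧⟦X⟧⟦X⟧) = vx * vy := by
        simp [vx, vy]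
      rw [hC]
      refine ⟨k1 - k2 + (vx + vy + vx ^ 2 * vy ^ 2) * k, ?_⟩
      linear_combination hk1 - hk2 + hi - h + X * (vx + vy + vx ^ 2 * vy ^ 2) * hk
  exact sub_eq_zero.1 (eq_zero_of_dvd _ fun n => (key n).2)

open PowerSeries in
theorem quad : X ^ 2 * PowerSeries.C X ^ 2 * Q2 ^ 2 - PowerSeries.C X * Q2 + 2 * X * Q2
    + PowerSeries.C X = 2 * X * PowerSeries.map PowerSeries.C Q1 := by
  have hx1 : ix (PowerSeries.C X) = vx := by simp [ix, vx]
  have hy1 : iy (PowerSeries.C X) = vy := by simp [iy, vy]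
  have hxt : ix X = X := by simp [ix]
  have hyt : iy X = X := by simp [iy]
  have hi : iy (PowerSeries.map PowerSeries.C Q1) = ix (PowerSeries.map PowerSeries.C Q1) := by
    ext m j i
    simp [ix, iy, coeff_C]
  have hX := congrArg ix Q2_eq
  have hY := congrArg iy Q2_eq
  rw [map_add, map_mul, hx1] at hX
  rw [map_add, map_mul, hy1, hi] at hY
  have hE : vx * vy * (ix Q2' - iy Q2' + (vy - vx) * Q3') =
      (vy - vx) * Q3 + vx * ix Q2 - vy * iy Q2 := by
    linear_combination (-(vy - vx)) * Q3_eq - vy * hX + vx * hY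
  have hinv := invariant_const
    (X ^ 2 * PowerSeries.C X ^ 2 * Q2 ^ 2 - PowerSeries.C X * Q2 + 2 * X * Q2 + PowerSeries.C X)
    (-(Q3 * X * (vx * ix Q2 - vy * iy Q2) + (ix Q2' - iy Q2' + (vy - vx) * Q3'))) ?_
  · rw [hinv]
    simp only [map_add, map_sub, map_mul, map_pow, map_ofNat, PowerSeries.map_X, PowerSeries.map_C,
      constantCoeff_X, map_zero, map_Q2]
    ring
  · simp only [map_add, map_sub, map_mul, map_pow, hx1, hy1, hxt, hyt, map_ofNat]
    have hne : vx * vy ≠ 0 := by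
      intro h
      have := congrArg (fun f => coeff 1 (coeff 1 (coeff 0 f))) h
      simp [coeff_X, vx, vy] at this
    apply mul_left_cancel₀ hne
    have hFE := FE
    generalize ix Q2' - iy Q2' + (vy - vx) * Q3' = E at *
    generalize ix Q2 = a at *
    generalize iy Q2 = b at *
    generalize vx = x at *
    generalize vy = y at *
    generalize (X : ℚ⟦X⟧⟦X⟧⟦X⟧) = t at *
    linear_combination (x * y - t * (x + y + x ^ 2 * y ^ 2)) * hE
      + (t * x * y * (x * a - y * b) + (y - x)) * hFE

end Krew

/-- Kreweras's product formula: the number of Kreweras words of length `3n` equals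
`4^n / ((n+1)(2n+1)) * choose (3n) n`, stated multiplicatively. -/
theorem kreweras_count (n : ℕ) :
    Nat.card {w : List KLetter // IsKrewerasWord n w} * ((n + 1) * (2 * n + 1))
      = 4 ^ n * Nat.choose (3 * n) n := by
  obtain ⟨g, hg⟩ := Krew.exists_g
  have hq := Krew.solve Krew.Q2 Krew.Q1 Krew.map_Q2 Krew.quad g hg
  have h := Krew.coeff_final g Krew.Q1 hg hq n
  rw [Krew.card_eq]
  simp only [Krew.Q1, PowerSeries.coeff_mk] at h
  exact_mod_cast h
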